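/- Fix R > R''. Let ∂̸ψ := (∂_jψ − ω_j ∂_rψ)_{j=1,2,3} denote the angular derivatives, with |∂̸ψ|² = Σ_j (∂_jψ − ω_j∂_rψ)². There exist T₀* depending only on R and R'', an absolute threshold τ₀ ≥ 1, and an absolute constant C > 0 (independent of τ, T₀, δ, ψ) such that for every T₀ ≥ T₀*, τ ≥ τ₀, δ ∈ (0,1/2), and every twice continuously differentiable compactly supported real-valued ψ on Ω_{T₀,R''} with supp ψ ⊂ {r − t < R}: ‖r^{−1}∂̸ψ‖² ≤ C(T₀^{−2}‖P₁ψ‖² + τ^{−1}‖P₂ψ‖² + τ²T₀^{−1}‖t^{−δ/2−1}ψ‖² + T₀^{−1}‖t^{−δ/2−1}∂_tψ‖²), where ‖r^{−1}∂̸ψ‖² := ∫_{Ω_{T₀,R''}} r^{−2}|∂̸ψ|² t² dx dt. -/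

import Mathlib

noncomputable section
open MeasureTheory Real Set Filter Topology

namespace UCP

/-- Spacetime `ℝ^{1+3}`: a point is `(t, x)` with `x ∈ ℝ³`. -/
abbrev Spc : Type := ℝ × EuclideanSpace ℝ (Fin 3)

/-- Coordinate directions `e_α`, `α = 0,1,2,3` (`e_0` is the time direction). -/
def eVec (α : Fin 4) : Spc :=
  Fin.cases ((1 : ℝ), (0 : EuclideanSpace ℝ (Fin 3)))
    (fun i => ((0 : ℝ), EuclideanSpace.single i (1 : ℝ))) α

/-- The partial derivative `∂_α u`. -/
def pd (α : Fin 4) (u : Spc → ℝ) (p : Spc) : ℝ := fderiv ℝ u p (eVec α)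

/-- `∂_t u`. -/
def dt (u : Spc → ℝ) : Spc → ℝ := pd 0 u

/-- `∂_i u`, `i = 1,2,3`. -/
def dxi (i : Fin 3) (u : Spc → ℝ) : Spc → ℝ := pd i.succ u

/-- The d'Alembertian `□u = -∂_t² u + Δ_x u`. -/
def box (u : Spc → ℝ) (p : Spc) : ℝ :=
  - dt (dt u) p + ∑ i : Fin 3, dxi i (dxi i u) p

/-- Signs of the Minkowski metric `diag(-1,1,1,1)`, so that `∂^α = eta α • ∂_α`. -/
def eta (α : Fin 4) : ℝ := if α = 0 then -1 else 1

/-- `r = |x|`. -/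
def rr (p : Spc) : ℝ := ‖p.2‖

/-- The radial derivative `∂_r u = Σ_i (x_i/r) ∂_i u`. -/
def dr (u : Spc → ℝ) (p : Spc) : ℝ := ∑ i : Fin 3, (p.2 i / rr p) * dxi i u p

/-- `ω̂ = (-1, x/r)` as a `Fin 4`-indexed family. -/
def hatom (p : Spc) (α : Fin 4) : ℝ := Fin.cases (-1 : ℝ) (fun i => p.2 i / rr p) α

/-- The region `Ω_{T₀,R''} = {t ≥ T₀, r - t > R''}`. -/
def Om (T₀ R'' : ℝ) : Set Spc := {p | T₀ ≤ p.1 ∧ R'' < rr p - p.1}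

/-- The open region `{t > T₀, r - t > R''}`. -/
def OmO (T₀ R'' : ℝ) : Set Spc := {p | T₀ < p.1 ∧ R'' < rr p - p.1}

/-- The weight `f_δ(t,x) = r - t - δ⁻¹ t^{-δ}`. -/
def fdel (δ : ℝ) (p : Spc) : ℝ := rr p - p.1 - δ⁻¹ * p.1 ^ (-δ)

/-- `P₁ψ = □ψ + τ² (∂^α f ∂_α f) ψ`. -/
def P1 (τ δ : ℝ) (ψ : Spc → ℝ) (p : Spc) : ℝ :=
  box ψ p + τ ^ 2 * (∑ α : Fin 4, eta α * pd α (fdel δ) p * pd α (fdel δ) p) * ψ p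

/-- `P₂ψ = -2τ ∂^α f ∂_α ψ`. -/
def P2 (τ δ : ℝ) (ψ : Spc → ℝ) (p : Spc) : ℝ :=
  -2 * τ * ∑ α : Fin 4, eta α * pd α (fdel δ) p * pd α ψ p

/-- The weighted inner product `⟨F,G⟩ = ∫_{Ω_{T₀,R''}} F G t² dx dt`. -/
def ip (T₀ R'' : ℝ) (F G : Spc → ℝ) : ℝ := ∫ p in Om T₀ R'', F p * G p * p.1 ^ 2

/-- The weighted norm `‖F‖ = ⟨F,F⟩^{1/2}`. -/
def nrm (T₀ R'' : ℝ) (F : Spc → ℝ) : ℝ := Real.sqrt (ip T₀ R'' F F)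

/-- `‖r⁻¹∂̸ψ‖² = ∫_{Ω_{T₀,R''}} r^{-2} Σ_j (∂_jψ - ω_j ∂_rψ)² t² dx dt`. -/
def angNorm2 (T₀ R'' : ℝ) (ψ : Spc → ℝ) : ℝ :=
  ∫ p in Om T₀ R'',
    (rr p)⁻¹ ^ 2 * (∑ j : Fin 3, (dxi j ψ p - (p.2 j / rr p) * dr ψ p) ^ 2) * p.1 ^ 2

section helpers

lemma pd_zero (α : Fin 4) {u : Spc → ℝ} {p : Spc} (h : p ∉ tsupport u) : pd α u p = 0 := by
  have : fderiv ℝ u p = 0 := by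
    by_contra h'
    exact h (support_fderiv_subset ℝ (Function.mem_support.2 h'))
  simp [pd, this]

lemma tsupport_pd (α : Fin 4) (u : Spc → ℝ) : tsupport (pd α u) ⊆ tsupport u := by
  apply closure_minimal _ (isClosed_tsupport u)
  intro p hp
  by_contra h
  exact hp (pd_zero α h)

lemma pd_contDiff (α : Fin 4) {u : Spc → ℝ} {n m : WithTop ℕ∞} (hu : ContDiff ℝ n u)
    (h : m + 1 ≤ n) : ContDiff ℝ m (pd α u) :=
  (hu.fderiv_right h).clm_apply contDiff_const

lemma integ {K : Set Spc} (hK : IsCompact K) {g : Spc → ℝ} (h0 : ∀ p ∉ K, g p = 0)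
    (hc : ∀ p ∈ K, ContinuousAt g p) : Integrable g := by
  have hs : tsupport g ⊆ K := by
    apply closure_minimal _ hK.isClosed
    intro p hp
    by_contra h
    exact hp (h0 p h)
  have hcont : Continuous g := continuous_of_tsupport (fun p hp => hc p (hs hp))
  exact hcont.integrable_of_hasCompactSupport (hK.of_isClosed_subset (isClosed_tsupport g) hs)

lemma int_pd (α : Fin 4) {h : Spc → ℝ} (hd : ContDiff ℝ 1 h) (hc : HasCompactSupport h) :
    Integrable (pd α h) ∧ ∫ p, pd α h p = 0 := by
  have hi : Integrable (pd α h) := by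
    refine integ hc (fun p hp => pd_zero α hp) (fun p _ => ?_)
    exact ((pd_contDiff (m := 0) α hd (by norm_num)).continuous).continuousAt
  refine ⟨hi, ?_⟩
  have : (volume : Measure Spc).IsAddHaarMeasure :=
    inferInstanceAs (((volume : Measure ℝ).prod
      (volume : Measure (EuclideanSpace ℝ (Fin 3)))).IsAddHaarMeasure)
  have := integral_mul_fderiv_eq_neg_fderiv_mul_of_integrable (𝕜 := ℝ) (μ := (volume : Measure Spc))
    (f := fun _ : Spc => (1:ℝ)) (g := h) (v := eVec α) (by simp)
    (by simp only [one_mul]; exact hi)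
    (by simpa using hd.continuous.integrable_of_hasCompactSupport hc)
    (fun x _ => differentiableAt_const _)
    (fun x _ => hd.differentiable (by norm_num) x)
  simpa [pd] using this

lemma contDiff_loc {K : Set Spc} {h : Spc → ℝ} {ψ : Spc → ℝ}  (h0 : ∀ p, ψ p = 0 → h p = 0)
    (hK : K = tsupport ψ)
    (hc : ∀ p ∈ K, ContDiffAt ℝ 1 h p) : ContDiff ℝ 1 h := by
  rw [contDiff_iff_contDiffAt]
  intro p
  by_cases hp : p ∈ K
  · exact hc p hp
  · subst hK
    have : h =ᶠ[𝓝 p] fun _ => 0 := by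
      filter_upwards [notMem_tsupport_iff_eventuallyEq.1 hp] with q hq
      exact h0 q hq
    exact contDiffAt_const.congr_of_eventuallyEq this

lemma ibp (α : Fin 4) {ψ a : Spc → ℝ} (hψ : ContDiff ℝ 2 ψ) (hc : HasCompactSupport ψ)
    (ha : ∀ p ∈ tsupport ψ, ContDiffAt ℝ 1 a p) :
    Integrable (fun p => pd α a p * ψ p ^ 2 + 2 * a p * ψ p * pd α ψ p) ∧
    ∫ p, (pd α a p * ψ p ^ 2 + 2 * a p * ψ p * pd α ψ p) = 0 := by
  have hd : ContDiff ℝ 1 (fun p => a p * ψ p ^ 2) := by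
    refine contDiff_loc (K := tsupport ψ) (ψ := ψ) (fun p hp => by simp [hp]) rfl (fun p hp => ?_)
    exact (ha p hp).mul ((hψ.of_le (by norm_num)).contDiffAt.pow 2)
  have hcs : HasCompactSupport (fun p => a p * ψ p ^ 2) := by
    refine hc.mono ?_
    intro p hp h
    exact hp (by simp [h])
  have e : (fun p => pd α a p * ψ p ^ 2 + 2 * a p * ψ p * pd α ψ p)
      = pd α (fun p => a p * ψ p ^ 2) := by
    funext p
    by_cases hp : p ∈ tsupport ψ
    · have h1 : HasFDerivAt a _ p := ((ha p hp).differentiableAt (by norm_num)).hasFDerivAt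
      have h2 : HasFDerivAt ψ _ p := (hψ.differentiable (by norm_num) p).hasFDerivAt
      have h3 := (h1.mul (h2.pow 2)).fderiv
      have h4 : pd α (fun p => a p * ψ p ^ 2) p = _ := congrArg (fun L => L (eVec α)) h3
      rw [h4]
      simp [pd]
      ring
    · rw [image_eq_zero_of_notMem_tsupport hp]
      rw [pd_zero α (u := fun p => a p * ψ p ^ 2)]
      · ring
      · intro h
        exact hp ((closure_mono (by
          intro p hp h
          exact hp (by simp [h])) : tsupport (fun p => a p * ψ p ^ 2) ⊆ tsupport ψ) h)
  rw [e]
  exact int_pd α hd hcs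

lemma ibp2 (α : Fin 4) {ψ : Spc → ℝ} (hψ : ContDiff ℝ 2 ψ) (hc : HasCompactSupport ψ) :
    Integrable (fun p => ψ p * pd α (pd α ψ) p + pd α ψ p ^ 2) ∧
    ∫ p, (ψ p * pd α (pd α ψ) p + pd α ψ p ^ 2) = 0 := by
  have h1 := pd_contDiff (m := 1) α hψ (by norm_num)
  have hd : ContDiff ℝ 1 (fun p => ψ p * pd α ψ p) := (hψ.of_le (by norm_num)).mul h1
  have e : (fun p => ψ p * pd α (pd α ψ) p + pd α ψ p ^ 2) = pd α (fun p => ψ p * pd α ψ p) := by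
    funext p
    have h1' : HasFDerivAt (pd α ψ) _ p := (h1.differentiable (by norm_num) p).hasFDerivAt
    have h2 : HasFDerivAt ψ _ p := (hψ.differentiable (by norm_num) p).hasFDerivAt
    have h3 := (h2.mul h1').fderiv
    have h4 : pd α (fun p => ψ p * pd α ψ p) p = _ := congrArg (fun L => L (eVec α)) h3
    rw [h4]
    simp [pd]
    ring
  rw [e]
  exact int_pd α hd hc.mul_right

lemma rr_hasFDerivAt {p : Spc} (hr : rr p ≠ 0) (i : Fin 3) : 
    DifferentiableAt ℝ rr p ∧ pd 0 rr p = 0 ∧ pd i.succ rr p = p.2 i / rr p := by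
  have hx : p.2 ≠ 0 := by simpa [rr] using hr
  have h : HasFDerivAt (fun q : Spc => ‖q.2‖^2) _ p := 
    (hasStrictFDerivAt_norm_sq p.2).hasFDerivAt.comp p hasFDerivAt_snd
  have h5 := h.sqrt (by simpa [rr] using hr)
  have h6 : HasFDerivAt rr _ p := h5.congr_of_eventuallyEq (by
    filter_upwards with q
    simp [rr])
  refine ⟨h6.differentiableAt, ?_, ?_⟩
  · rw [pd, h6.fderiv]
    simp [eVec]
  · rw [pd, h6.fderiv]
    simp [eVec, rr]
    rw [EuclideanSpace.inner_single_right]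
    simp
    field_simp

lemma tpow_hasFDerivAt {p : Spc} (ht : 0 < p.1) (c : ℝ) (i : Fin 3) :
    DifferentiableAt ℝ (fun q : Spc => q.1 ^ c) p ∧ 
    pd 0 (fun q : Spc => q.1 ^ c) p = c * p.1 ^ (c - 1) ∧ 
    pd i.succ (fun q : Spc => q.1 ^ c) p = 0 := by
  have h : HasFDerivAt (fun q : Spc => q.1 ^ c) _ p := 
    (hasFDerivAt_fst (𝕜 := ℝ) (p := p)).rpow_const (p := c) (Or.inl ht.ne')
  refine ⟨h.differentiableAt, ?_, ?_⟩
  · rw [pd, h.fderiv]; simp [eVec]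
  · rw [pd, h.fderiv]; simp [eVec]

lemma pd_fst (p : Spc) (i : Fin 3) : pd 0 (fun q : Spc => q.1) p = 1 ∧ 
    pd i.succ (fun q : Spc => q.1) p = 0 := by
  have h : HasFDerivAt (fun q : Spc => q.1) _ p := hasFDerivAt_fst (𝕜 := ℝ) (p := p)
  constructor <;> (rw [pd, h.fderiv]; simp [eVec])

lemma pd_f {δ : ℝ} (hδ : 0 < δ) {p : Spc} (ht : 0 < p.1) (hr : rr p ≠ 0) (i : Fin 3) :
    pd 0 (fdel δ) p = -1 + p.1 ^ (-δ - 1) ∧ pd i.succ (fdel δ) p = p.2 i / rr p := by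
  obtain ⟨a1, a2, a3⟩ := rr_hasFDerivAt hr i
  obtain ⟨b1, b2, b3⟩ := tpow_hasFDerivAt ht (-δ) i
  obtain ⟨c2, c3⟩ := pd_fst p i
  have h : HasFDerivAt (fdel δ) _ p := (a1.hasFDerivAt.sub 
    (hasFDerivAt_fst (𝕜 := ℝ) (p := p))).sub (b1.hasFDerivAt.const_mul δ⁻¹)
  have hf : fderiv ℝ (Prod.fst : Spc → ℝ) p = ContinuousLinearMap.fst ℝ _ _ := 
    (hasFDerivAt_fst (𝕜 := ℝ) (p := p)).fderiv
  unfold pd at a2 a3 b2 b3 c2 c3 ⊢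
  rw [h.fderiv]
  rw [hf] at c2 c3
  constructor
  · simp only [sub_apply, smul_apply, a2, b2, c2, smul_eq_mul]
    field_simp
    ring
  · simp only [sub_apply, smul_apply, a3, b3, c3, smul_eq_mul]
    ring

lemma rr_sq (p : Spc) : p.2 0 ^ 2 + p.2 1 ^ 2 + p.2 2 ^ 2 = rr p ^ 2 := by
  simp [rr, EuclideanSpace.norm_sq_eq, Fin.sum_univ_three]

lemma pd_a0 {δ : ℝ} {p : Spc} (ht : 0 < p.1) :
    ContDiffAt ℝ 1 (fun q : Spc => q.1 - q.1 ^ (-δ)) p ∧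
    pd 0 (fun q : Spc => q.1 - q.1 ^ (-δ)) p = 1 + δ * p.1 ^ (-δ - 1) := by
  obtain ⟨b1, b2, b3⟩ := tpow_hasFDerivAt ht (-δ) 0
  obtain ⟨c2, c3⟩ := pd_fst p 0
  constructor
  · exact contDiffAt_fst.sub (contDiffAt_fst.rpow_const_of_ne ht.ne')
  have h : HasFDerivAt (fun q : Spc => q.1 - q.1 ^ (-δ)) _ p := 
    (hasFDerivAt_fst (𝕜 := ℝ) (p := p)).sub b1.hasFDerivAt
  unfold pd at b2 ⊢
  rw [h.fderiv]
  simp only [sub_apply, b2]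
  simp [eVec]

lemma rr_contDiffAt {p : Spc} (hr : rr p ≠ 0) : ContDiffAt ℝ 1 rr p := by
  have hx : p.2 ≠ 0 := by simpa [rr] using hr
  exact contDiffAt_snd.norm ℝ hx

lemma pd_ai {p : Spc} (hr : rr p ≠ 0) (i : Fin 3) :
    ContDiffAt ℝ 1 (fun q : Spc => q.1 * (q.2 i / rr q)) p ∧
    pd i.succ (fun q : Spc => q.1 * (q.2 i / rr q)) p = 
      p.1 * (1 / rr p - p.2 i ^ 2 / rr p ^ 3) := by
  obtain ⟨a1, a2, a3⟩ := rr_hasFDerivAt hr i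
  have hX : HasFDerivAt (fun q : Spc => q.2 i) 
    ((EuclideanSpace.proj i : EuclideanSpace ℝ (Fin 3) →L[ℝ] ℝ).comp (ContinuousLinearMap.snd ℝ ℝ _)) p := 
    ((EuclideanSpace.proj i : EuclideanSpace ℝ (Fin 3) →L[ℝ] ℝ).comp (ContinuousLinearMap.snd ℝ ℝ _)).hasFDerivAt
  have hXc : ContDiffAt ℝ 1 (fun q : Spc => q.2 i) p :=
    ((EuclideanSpace.proj i : EuclideanSpace ℝ (Fin 3) →L[ℝ] ℝ).comp (ContinuousLinearMap.snd ℝ ℝ _)).contDiff.contDiffAt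
  constructor
  · exact contDiffAt_fst.mul (hXc.div (rr_contDiffAt hr) hr)
  have h : HasFDerivAt (fun q : Spc => q.1 * (q.2 i / rr q)) _ p := 
    (hasFDerivAt_fst (𝕜 := ℝ) (p := p)).mul
      (hX.mul ((hasDerivAt_inv hr).comp_hasFDerivAt p a1.hasFDerivAt))
  unfold pd at a3 ⊢
  rw [h.fderiv]
  simp [a3]
  simp [eVec]
  field_simp
  ring

lemma P1_eq {τ δ : ℝ} (hδ : 0 < δ) (ψ : Spc → ℝ) {p : Spc} (ht : 0 < p.1) (hr : rr p ≠ 0) :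
    P1 τ δ ψ p = box ψ p + τ ^ 2 * (2 * p.1 ^ (-δ - 1) - (p.1 ^ (-δ - 1)) ^ 2) * ψ p := by
  have h := fun i => (pd_f hδ ht hr i).2
  rw [P1, Fin.sum_univ_succ, Fin.sum_univ_three]
  simp only [h, (pd_f hδ ht hr 0).1, eta, Fin.succ_ne_zero, if_true, if_false]
  have : (p.2 0 / rr p)*(p.2 0 / rr p) + (p.2 1 / rr p)*(p.2 1 / rr p) + (p.2 2 / rr p)*(p.2 2 / rr p) = 1 := by
    field_simp
    exact rr_sq p
  linear_combination τ^2 * ψ p * this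

lemma P2_eq {τ δ : ℝ} (hδ : 0 < δ) (ψ : Spc → ℝ) {p : Spc} (ht : 0 < p.1) (hr : rr p ≠ 0) :
    P2 τ δ ψ p = -2 * τ * ((1 - p.1 ^ (-δ - 1)) * dt ψ p + dr ψ p) := by
  have h := fun i => (pd_f hδ ht hr i).2
  rw [P2, Fin.sum_univ_succ, dr]
  simp only [h, (pd_f hδ ht hr 0).1, eta, Fin.succ_ne_zero, if_true, if_false, dt, dxi]
  simp only [one_mul]
  ring

set_option maxHeartbeats 1000000 in
lemma ptw {T t r τ q s δ A ψ ψt ψr b G N1 N2 Q P1 : ℝ} (hT : 1 ≤ T) (htT : T ≤ t) (hτ : 1 ≤ τ) (hδ : 0 < δ)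
    (hr : t ≤ 2 * r) (hq0 : 0 < q) (hqt : 1 ≤ q * t) (hs : s * t = q)
    (hA : A = G - ψr ^ 2) (hA0 : 0 ≤ A)
    (hN1 : N1 = ψ * b + G - ψt ^ 2)
    (hP1 : P1 = b + τ ^ 2 * (2 * s - s ^ 2) * ψ)
    (hQ : Q = (1 - s) * ψt + ψr)
    (hN2 : N2 = ψ ^ 2 * (1 + δ * s + 2 * t / r) + 2 * t * ψ * Q) :
    r⁻¹ ^ 2 * A * t ^ 2 ≤ 12 * (T⁻¹ ^ 2 * (P1 ^ 2 * t ^ 2) + τ⁻¹ * ((-2 * τ * Q) ^ 2 * t ^ 2) 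
      + τ ^ 2 * T⁻¹ * (q * ψ ^ 2) + T⁻¹ * (q * ψt ^ 2)) + 4 * N1 + 4 * N2 := by
  have ht : 0 < t := by linarith
  have hr0 : 0 < r := by linarith
  have hT0 : 0 < T := by linarith
  have hs0 : 0 < s := by
    by_contra h
    nlinarith
  have hsT : s ≤ T⁻¹ * q := by
    rw [← hs]
    rw [inv_mul_eq_div, le_div_iff₀ hT0]
    nlinarith
  have e1 : r⁻¹ ^ 2 * A * t ^ 2 ≤ 4 * A := by
    have : r⁻¹ ^ 2 * A * t ^ 2 = (t / r) ^ 2 * A := by field_simp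
    rw [this]
    have h2 : t / r ≤ 2 := by rw [div_le_iff₀ hr0]; exact hr
    have h3 : 0 < t / r := by positivity
    have h4 : (t / r) ^ 2 ≤ 4 := by nlinarith
    exact mul_le_mul_of_nonneg_right h4 hA0
  have e2 : A = N1 + (ψt ^ 2 - ψr ^ 2) - ψ * P1 + τ ^ 2 * (2 * s - s ^ 2) * ψ ^ 2 := by
    rw [hA, hN1, hP1]; ring
  have e3 : ψt ^ 2 - ψr ^ 2 ≤ 2 * Q * ψt + 2 * s * ψt ^ 2 := by
    rw [hQ]; nlinarith [sq_nonneg (ψt + ψr)]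
  have e4 : 2 * Q * ψt ≤ T / q * Q ^ 2 + T⁻¹ * q * ψt ^ 2 := by
    have : 0 ≤ T / q * (Q - T⁻¹ * q * ψt) ^ 2 := by positivity
    have h : T / q * (Q - T⁻¹ * q * ψt) ^ 2 = T / q * Q ^ 2 - 2 * Q * ψt + T⁻¹ * q * ψt ^ 2 := by
      field_simp
      ring
    linarith
  have e5 : T / q ≤ t ^ 2 := by
    rw [div_le_iff₀ hq0]; nlinarith
  have e5' : T / q * Q ^ 2 ≤ t ^ 2 * Q ^ 2 := by gcongr
  have e6 : - ψ * P1 ≤ T⁻¹ ^ 2 * (P1 ^ 2 * t ^ 2) + ψ ^ 2 / 2 := by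
    have h1 : 1 ≤ T⁻¹ * t := by rw [inv_mul_eq_div, one_le_div hT0]; exact htT
    have h2 : P1 ^ 2 ≤ (T⁻¹ * t) ^ 2 * P1 ^ 2 := by
      have : 1 ≤ (T⁻¹ * t) ^ 2 := one_le_pow₀ h1
      nlinarith [sq_nonneg P1]
    have h3 : T⁻¹ ^ 2 * (P1 ^ 2 * t ^ 2) = (T⁻¹ * t) ^ 2 * P1 ^ 2 := by ring
    have h4 : -ψ * P1 ≤ P1 ^ 2 / 2 + ψ ^ 2 / 2 := by linarith [sq_nonneg (ψ + P1)]
    linarith [sq_nonneg P1]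
  have e7 : ψ ^ 2 / 2 ≤ N2 + 2 * t ^ 2 * Q ^ 2 := by
    have h1 : 0 ≤ ψ ^ 2 * (δ * s + 2 * t / r) := by positivity
    linarith [sq_nonneg (ψ + 2 * t * Q)]
  have e8 : τ ^ 2 * (2 * s - s ^ 2) * ψ ^ 2 ≤ 2 * (τ ^ 2 * T⁻¹ * (q * ψ ^ 2)) := by
    have h1 : 2 * s - s ^ 2 ≤ 2 * (T⁻¹ * q) := by linarith [sq_nonneg s]
    have h2 : τ ^ 2 * (2 * s - s ^ 2) * ψ ^ 2 ≤ τ ^ 2 * (2 * (T⁻¹ * q)) * ψ ^ 2 := by gcongr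
    linarith
  have e9 : 2 * s * ψt ^ 2 ≤ 2 * (T⁻¹ * (q * ψt ^ 2)) := by
    have : s * ψt ^ 2 ≤ T⁻¹ * q * ψt ^ 2 := by gcongr
    linarith
  have e10 : t ^ 2 * Q ^ 2 * 4 ≤ τ⁻¹ * ((-2 * τ * Q) ^ 2 * t ^ 2) := by
    have : τ⁻¹ * ((-2 * τ * Q) ^ 2 * t ^ 2) = τ * (t ^ 2 * Q ^ 2 * 4) := by field_simp; ring
    rw [this]
    exact le_mul_of_one_le_left (by positivity) hτ
  have p1 : 0 ≤ T⁻¹ ^ 2 * (P1 ^ 2 * t ^ 2) := by positivity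
  have p2 : 0 ≤ t ^ 2 * Q ^ 2 := by positivity
  have p3 : 0 ≤ τ ^ 2 * T⁻¹ * (q * ψ ^ 2) := by positivity
  have p4 : 0 ≤ T⁻¹ * (q * ψt ^ 2) := by positivity
  linarith

lemma loc_ev {p : Spc} (ht : 0 < p.1) (hr : rr p ≠ 0) : ∀ᶠ q : Spc in 𝓝 p, 0 < q.1 ∧ rr q ≠ 0 := by
  have h1 : ContinuousAt (fun q : Spc => q.1) p := continuousAt_fst
  have h2 : ContinuousAt rr p := (rr_contDiffAt hr).continuousAt
  exact (h1.eventually (lt_mem_nhds ht)).and (h2.eventually_ne hr)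

lemma cont_dr {ψ : Spc → ℝ} (hψ : ContDiff ℝ 2 ψ) {p : Spc} (hr : rr p ≠ 0) :
    ContinuousAt (dr ψ) p := by
  have h2 : ContinuousAt rr p := (rr_contDiffAt hr).continuousAt
  have h3 : ∀ i : Fin 3, ContinuousAt (fun q : Spc => q.2 i) p := fun i => by fun_prop
  have h4 : ∀ i : Fin 3, ContinuousAt (dxi i ψ) p := fun i =>
    (pd_contDiff (m := 1) i.succ hψ (by norm_num)).continuous.continuousAt
  unfold dr
  exact tendsto_finsetSum _ fun i _ => ((h3 i).div h2 hr).mul (h4 i)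

lemma cont_P1 {τ δ : ℝ} (hδ : 0 < δ) {ψ : Spc → ℝ} (hψ : ContDiff ℝ 2 ψ) {p : Spc}
    (ht : 0 < p.1) (hr : rr p ≠ 0) : ContinuousAt (P1 τ δ ψ) p := by
  have hb : ContinuousAt (box ψ) p := by
    have : ∀ α, Continuous (pd α (pd α ψ)) := fun α =>
      (pd_contDiff (m := 0) α (pd_contDiff (m := 1) α hψ (by norm_num)) (by norm_num)).continuous
    have h : Continuous (box ψ) := by
      unfold box
      exact (this 0).neg.add (continuous_finsetSum _ fun i _ => this i.succ)
    exact h.continuousAt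
  have hs : ContinuousAt (fun q : Spc => q.1 ^ (-δ - 1)) p :=
    continuousAt_fst.rpow_const (Or.inl ht.ne')
  have hp : ContinuousAt ψ p := hψ.continuous.continuousAt
  have : ContinuousAt (fun p => box ψ p + τ ^ 2 * (2 * p.1 ^ (-δ - 1) - (p.1 ^ (-δ - 1)) ^ 2) * ψ p) p :=
    hb.add (((continuousAt_const).mul ((continuousAt_const.mul hs).sub (hs.pow 2))).mul hp)
  refine this.congr ?_
  filter_upwards [loc_ev ht hr] with q hq
  exact (P1_eq hδ ψ hq.1 hq.2).symm

lemma cont_P2 {τ δ : ℝ} (hδ : 0 < δ) {ψ : Spc → ℝ} (hψ : ContDiff ℝ 2 ψ) {p : Spc}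
    (ht : 0 < p.1) (hr : rr p ≠ 0) : ContinuousAt (P2 τ δ ψ) p := by
  have hs : ContinuousAt (fun q : Spc => q.1 ^ (-δ - 1)) p :=
    continuousAt_fst.rpow_const (Or.inl ht.ne')
  have hp : ContinuousAt (dt ψ) p :=
    (pd_contDiff (m := 1) 0 hψ (by norm_num)).continuous.continuousAt
  have : ContinuousAt (fun p => -2 * τ * ((1 - p.1 ^ (-δ - 1)) * dt ψ p + dr ψ p)) p :=
    continuousAt_const.mul (((continuousAt_const.sub hs).mul hp).add (cont_dr hψ hr))
  refine this.congr ?_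
  filter_upwards [loc_ev ht hr] with q hq
  exact (P2_eq hδ ψ hq.1 hq.2).symm

lemma nrm_sq {K : Set Spc} {T R : ℝ} (hK : IsCompact K) (hKO : K ⊆ Om T R) {F : Spc → ℝ}
    (h0 : ∀ p ∉ K, F p = 0) (hc : ∀ p ∈ K, ContinuousAt F p) :
    Integrable (fun p : Spc => F p * F p * p.1 ^ 2) ∧
      nrm T R F ^ 2 = ∫ p : Spc, F p * F p * p.1 ^ 2 := by
  constructor
  · refine integ hK (fun p hp => by simp [h0 p hp]) (fun p hp => ?_)
    exact ((hc p hp).mul (hc p hp)).mul (continuousAt_fst.pow 2)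
  · rw [nrm, Real.sq_sqrt, ip]
    · apply setIntegral_eq_integral_of_forall_compl_eq_zero
      intro p hp
      simp [h0 p (fun h => hp (hKO h))]
    · exact integral_nonneg fun p => mul_nonneg (mul_self_nonneg _) (sq_nonneg _)

lemma combine {A J1 J2 J3 J4 M0 M1 M2 M3 K0 K1 K2 K3 : Spc → ℝ} {c1 c2 c3 c4 : ℝ}
    (i1 : Integrable J1) (i2 : Integrable J2) (i3 : Integrable J3) (i4 : Integrable J4)
    (m0 : Integrable M0 ∧ ∫ p, M0 p = 0) (m1 : Integrable M1 ∧ ∫ p, M1 p = 0)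
    (m2 : Integrable M2 ∧ ∫ p, M2 p = 0) (m3 : Integrable M3 ∧ ∫ p, M3 p = 0)
    (k0 : Integrable K0 ∧ ∫ p, K0 p = 0) (k1 : Integrable K1 ∧ ∫ p, K1 p = 0)
    (k2 : Integrable K2 ∧ ∫ p, K2 p = 0) (k3 : Integrable K3 ∧ ∫ p, K3 p = 0)
    (hA : ∀ p, 0 ≤ A p)
    (hp : ∀ p, A p ≤ 12 * (c1 * J1 p + c2 * J2 p + c3 * J3 p + c4 * J4 p)
      + 4 * (M1 p + M2 p + M3 p - M0 p) + 4 * (K0 p + K1 p + K2 p + K3 p)) :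
    ∫ p, A p ≤ 12 * (c1 * (∫ p, J1 p) + c2 * (∫ p, J2 p) + c3 * (∫ p, J3 p) + c4 * (∫ p, J4 p)) := by
  obtain ⟨m0, m0'⟩ := m0
  obtain ⟨m1, m1'⟩ := m1
  obtain ⟨m2, m2'⟩ := m2
  obtain ⟨m3, m3'⟩ := m3
  obtain ⟨k0, k0'⟩ := k0
  obtain ⟨k1, k1'⟩ := k1
  obtain ⟨k2, k2'⟩ := k2
  obtain ⟨k3, k3'⟩ := k3
  have a1 := i1.const_mul c1
  have a2 := i2.const_mul c2
  have a3 := i3.const_mul c3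
  have a4 := i4.const_mul c4
  have b2 : Integrable (fun p => c1 * J1 p + c2 * J2 p) := a1.add a2
  have b3 : Integrable (fun p => c1 * J1 p + c2 * J2 p + c3 * J3 p) := b2.add a3
  have b4 : Integrable (fun p => c1 * J1 p + c2 * J2 p + c3 * J3 p + c4 * J4 p) := b3.add a4
  have d2 : Integrable (fun p => M1 p + M2 p) := m1.add m2
  have d3 : Integrable (fun p => M1 p + M2 p + M3 p) := d2.add m3
  have d4 : Integrable (fun p => M1 p + M2 p + M3 p - M0 p) := d3.sub m0
  have e2 : Integrable (fun p => K0 p + K1 p) := k0.add k1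
  have e3 : Integrable (fun p => K0 p + K1 p + K2 p) := e2.add k2
  have e4 : Integrable (fun p => K0 p + K1 p + K2 p + K3 p) := e3.add k3
  have g1 : Integrable (fun p => 12 * (c1 * J1 p + c2 * J2 p + c3 * J3 p + c4 * J4 p)
      + 4 * (M1 p + M2 p + M3 p - M0 p)) := (b4.const_mul 12).add (d4.const_mul 4)
  refine (integral_mono_of_nonneg (Eventually.of_forall hA) (g1.add (e4.const_mul 4))
    (Eventually.of_forall hp)).trans (le_of_eq ?_)
  simp only [Pi.add_apply]
  rw [integral_add g1 (e4.const_mul 4), integral_add (b4.const_mul 12) (d4.const_mul 4),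
    integral_const_mul, integral_const_mul, integral_const_mul,
    integral_add b3 a4, integral_add b2 a3, integral_add a1 a2,
    integral_const_mul, integral_const_mul, integral_const_mul, integral_const_mul,
    integral_sub d3 m0, integral_add d2 m3, integral_add m1 m2,
    integral_add e3 k3, integral_add e2 k2, integral_add k0 k1,
    m0', m1', m2', m3', k0', k1', k2', k3']
  ring

end helpers

/-- Lemma 3.9 of the paper: estimate for the angular derivatives. -/
theorem stmt11 (R R'' : ℝ) (hRR : R'' < R) :
    ∃ T₀star τ₀ C : ℝ, 1 ≤ τ₀ ∧ 0 < C ∧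
      ∀ T₀, T₀star ≤ T₀ → ∀ τ, τ₀ ≤ τ → ∀ δ, 0 < δ → δ < 1 / 2 →
        ∀ ψ : Spc → ℝ, ContDiff ℝ 2 ψ → HasCompactSupport ψ →
          tsupport ψ ⊆ OmO T₀ R'' ∩ {p : Spc | rr p - p.1 < R} →
          angNorm2 T₀ R'' ψ
            ≤ C * (T₀⁻¹ ^ 2 * nrm T₀ R'' (P1 τ δ ψ) ^ 2
                + τ⁻¹ * nrm T₀ R'' (P2 τ δ ψ) ^ 2
                + τ ^ 2 * T₀⁻¹ * nrm T₀ R'' (fun p => p.1 ^ (-δ / 2 - 1) * ψ p) ^ 2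
                + T₀⁻¹ * nrm T₀ R'' (fun p => p.1 ^ (-δ / 2 - 1) * dt ψ p) ^ 2) := by
  refine ⟨1 + 2 * |R''|, 1, 12, le_refl _, by norm_num, ?_⟩
  intro T hT τ hτ δ hδ hδ2 ψ hψ hc hsupp
  have hT1 : 1 ≤ T := by linarith [abs_nonneg R'']
  have hK1 : ∀ p ∈ tsupport ψ, T ≤ p.1 ∧ 0 < p.1 ∧ p.1 ≤ 2 * rr p ∧ rr p ≠ 0 := by
    intro p hp
    obtain ⟨⟨h1, h2⟩, -⟩ := hsupp hp
    have := neg_abs_le R''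
    have h3 : p.1 ≤ 2 * rr p := by linarith
    have h4 : 0 < p.1 := by linarith
    exact ⟨h1.le, h4, h3, by intro h; rw [h] at h3; linarith⟩
  have hKO : tsupport ψ ⊆ Om T R'' := by
    intro p hp
    obtain ⟨⟨h1, h2⟩, -⟩ := hsupp hp
    exact ⟨h1.le, h2⟩
  have hK : IsCompact (tsupport ψ) := hc
  have z0 : ∀ p ∉ tsupport ψ, ψ p = 0 := fun p hp => image_eq_zero_of_notMem_tsupport hp
  have z1 : ∀ p ∉ tsupport ψ, ∀ α, pd α ψ p = 0 := fun p hp α => pd_zero α hp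
  have z2 : ∀ p ∉ tsupport ψ, ∀ α, pd α (pd α ψ) p = 0 := fun p hp α =>
    pd_zero α (fun h => hp (tsupport_pd α ψ h))
  have zP1 : ∀ p ∉ tsupport ψ, P1 τ δ ψ p = 0 := fun p hp => by
    simp [P1, box, dt, dxi, z0 p hp, z2 p hp]
  have zP2 : ∀ p ∉ tsupport ψ, P2 τ δ ψ p = 0 := fun p hp => by
    simp [P2, z1 p hp]
  have cpow : ∀ p ∈ tsupport ψ, ContinuousAt (fun p : Spc => p.1 ^ (-δ / 2 - 1)) p :=
    fun p hp => continuousAt_fst.rpow_const (Or.inl (hK1 p hp).2.1.ne')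
  have cdt : Continuous (dt ψ) := (pd_contDiff (m := 1) 0 hψ (by norm_num)).continuous
  obtain ⟨i1, n1⟩ := nrm_sq hK hKO zP1
    (fun p hp => cont_P1 hδ hψ (hK1 p hp).2.1 (hK1 p hp).2.2.2)
  obtain ⟨i2, n2⟩ := nrm_sq hK hKO zP2
    (fun p hp => cont_P2 hδ hψ (hK1 p hp).2.1 (hK1 p hp).2.2.2)
  obtain ⟨i3, n3⟩ := nrm_sq (F := fun p => p.1 ^ (-δ / 2 - 1) * ψ p) hK hKO
    (fun p hp => by simp [z0 p hp])
    (fun p hp => (cpow p hp).mul hψ.continuous.continuousAt)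
  obtain ⟨i4, n4⟩ := nrm_sq (F := fun p => p.1 ^ (-δ / 2 - 1) * dt ψ p) hK hKO
    (fun p hp => by simp [dt, z1 p hp])
    (fun p hp => (cpow p hp).mul cdt.continuousAt)
  rw [n1, n2, n3, n4]
  have m0 := ibp2 0 hψ hc
  have m1 := ibp2 1 hψ hc
  have m2 := ibp2 2 hψ hc
  have m3 := ibp2 3 hψ hc
  have k0 := ibp 0 (a := fun q : Spc => q.1 - q.1 ^ (-δ)) hψ hc
    (fun p hp => (pd_a0 (hK1 p hp).2.1).1)
  have k1 := ibp 1 (a := fun q : Spc => q.1 * (q.2 0 / rr q)) hψ hc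
    (fun p hp => (pd_ai (hK1 p hp).2.2.2 0).1)
  have k2 := ibp 2 (a := fun q : Spc => q.1 * (q.2 1 / rr q)) hψ hc
    (fun p hp => (pd_ai (hK1 p hp).2.2.2 1).1)
  have k3 := ibp 3 (a := fun q : Spc => q.1 * (q.2 2 / rr q)) hψ hc
    (fun p hp => (pd_ai (hK1 p hp).2.2.2 2).1)
  have hang : angNorm2 T R'' ψ = ∫ p : Spc, (rr p)⁻¹ ^ 2 *
      (∑ j : Fin 3, (dxi j ψ p - (p.2 j / rr p) * dr ψ p) ^ 2) * p.1 ^ 2 := by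
    apply setIntegral_eq_integral_of_forall_compl_eq_zero
    intro p hp
    have hp' : p ∉ tsupport ψ := fun h => hp (hKO h)
    simp [dxi, dr, z1 p hp']
  rw [hang]
  refine combine i1 i2 i3 i4 m0 m1 m2 m3 k0 k1 k2 k3 (fun p => by positivity) (fun p => ?_)
  by_cases hp : p ∈ tsupport ψ
  swap
  · simp [dxi, dr, dt, z0 p hp, z1 p hp, z2 p hp, zP1 p hp, zP2 p hp]
  obtain ⟨hTt, ht, htr, hr⟩ := hK1 p hp
  have ht1 : 1 ≤ p.1 := hT1.trans hTt
  have q0 : 0 < p.1 ^ (-δ) := Real.rpow_pos_of_pos ht _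
  have qs : p.1 ^ (-δ - 1) * p.1 = p.1 ^ (-δ) := by
    rw [Real.rpow_sub_one ht.ne']
    field_simp
  have qt : 1 ≤ p.1 ^ (-δ) * p.1 := by
    have : p.1 ^ (-δ) * p.1 = p.1 ^ (-δ + 1) := by rw [Real.rpow_add_one ht.ne']
    rw [this]
    exact Real.one_le_rpow ht1 (by linarith)
  have qq : (p.1 ^ (-δ / 2 - 1)) ^ 2 * p.1 ^ 2 = p.1 ^ (-δ) := by
    rw [← mul_pow, Real.rpow_sub_one ht.ne', div_mul_cancel₀ _ ht.ne', ← Real.rpow_natCast,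
      ← Real.rpow_mul ht.le]
    norm_num
  have hdr : dr ψ p = p.2 0 / rr p * pd 1 ψ p + p.2 1 / rr p * pd 2 ψ p
      + p.2 2 / rr p * pd 3 ψ p := by
    rw [dr, Fin.sum_univ_three]; rfl
  have hw : (p.2 0 / rr p) ^ 2 + (p.2 1 / rr p) ^ 2 + (p.2 2 / rr p) ^ 2 = 1 := by
    field_simp
    exact rr_sq p
  have hA : ∑ j : Fin 3, (dxi j ψ p - (p.2 j / rr p) * dr ψ p) ^ 2
      = (pd 1 ψ p ^ 2 + pd 2 ψ p ^ 2 + pd 3 ψ p ^ 2) - dr ψ p ^ 2 := by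
    rw [Fin.sum_univ_three]
    change (pd 1 ψ p - _) ^ 2 + (pd 2 ψ p - _) ^ 2 + (pd 3 ψ p - _) ^ 2 = _
    linear_combination dr ψ p ^ 2 * hw + 2 * dr ψ p * hdr
  have hbox : box ψ p = - pd 0 (pd 0 ψ) p + (pd 1 (pd 1 ψ) p + pd 2 (pd 2 ψ) p
      + pd 3 (pd 3 ψ) p) := by
    rw [box, Fin.sum_univ_three]; rfl
  have d0 := (pd_a0 (δ := δ) ht).2
  have d1 : pd 1 _ p = _ := (pd_ai hr 0).2
  have d2 : pd 2 _ p = _ := (pd_ai hr 1).2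
  have d3 : pd 3 _ p = _ := (pd_ai hr 2).2
  have main := ptw (T := T) (t := p.1) (r := rr p) (τ := τ) (q := p.1 ^ (-δ))
    (s := p.1 ^ (-δ - 1)) (δ := δ) (ψ := ψ p) (ψt := dt ψ p) (b := box ψ p)
    (N1 := ψ p * box ψ p + (pd 1 ψ p ^ 2 + pd 2 ψ p ^ 2 + pd 3 ψ p ^ 2) - dt ψ p ^ 2)
    (P1 := P1 τ δ ψ p) (Q := (1 - p.1 ^ (-δ - 1)) * dt ψ p + dr ψ p)
    hT1 hTt hτ hδ htr q0 qt qs hA (by positivity) rfl (P1_eq hδ ψ ht hr) rfl rfl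
  rw [← P2_eq hδ ψ ht hr] at main
  refine main.trans (le_of_eq ?_)
  simp only [d0, d1, d2, d3]
  have hdiv : p.1 * (1 / rr p - p.2 0 ^ 2 / rr p ^ 3) + p.1 * (1 / rr p - p.2 1 ^ 2 / rr p ^ 3)
      + p.1 * (1 / rr p - p.2 2 ^ 2 / rr p ^ 3) = 2 * p.1 / rr p := by
    field_simp
    linear_combination - rr_sq p
  rw [hbox, ← hdiv, hdr, ← qq, show dt ψ p = pd 0 ψ p from rfl]
  have qs' := qs.trans qq.symm
  linear_combination (-8 * ψ p * pd 0 ψ p) * qs'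

end UCP
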